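/- Let C be a caterpillar whose spine has order s. If C has a tail of order ⌊(s-1)/2⌋, then C is antimagic. -/

import Mathlib

/-!
Let the longest path of the caterpillar be traversed from the far end towards the tail; its edges
are `e₀, …, e_s` and its spine vertices `w₀, …, w_{s-1}`, with `w_k` incident to `e_k` and
`e_{k+1}`. Let `m` be the number of edges and `X = ⌊s/2⌋ + 1`. The edges with even index get the
labels `X, X - 1, …, 1`, those with odd index get `m, m - 1, …`; the two path edges at `w_k` then
sum to `X + m - k`. The remaining legs get the labels strictly between these two blocks.

* Leaves have distinct sums, all smaller than the sum of any spine vertex.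
* Spine vertices of degree two have the distinct sums `X + m - k ≤ X + m`.
* The tail forces a spine vertex `w_k` with a further leg to satisfy `k + ⌊(s-1)/2⌋ ≤ s`. Since
  each leg has label at least `X + 1`, its sum exceeds `X + m`.
* The leg labels can be distributed so that the spine vertices with legs have distinct sums: take
  a distribution maximizing the sum of the squares of these sums (`exists_leg_labels`).

The labeling is carried out in `isAntimagic_of_spineEnum`. That a tail occupies the end of the
spine is `SpineEnum.longest` (an endpoint of a longest path is a leaf at an end of the spine) and
`SpineEnum.tail`.
-/

open Finset SimpleGraph
open scoped Classical

variable {V : Type*}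

/-- The spine of a graph: the set of its non-leaf vertices (for a tree of order at
least 3, these are exactly the vertices of degree at least 2). -/
noncomputable def SimpleGraph.spine [Fintype V] (G : SimpleGraph V) : Set V :=
  {v | 2 ≤ G.degree v}

/-- The order of the spine, i.e., its number of vertices. -/
noncomputable def SimpleGraph.spineOrder [Fintype V] (G : SimpleGraph V) : ℕ :=
  Nat.card G.spine

/-- A caterpillar is a tree of order at least 3 such that removing all of its leaves
produces a path (i.e., the subgraph induced on the non-leaf vertices is a path graph). -/
def SimpleGraph.IsCaterpillar [Fintype V] (G : SimpleGraph V) : Prop :=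
  G.IsTree ∧ 3 ≤ Fintype.card V ∧
    Nonempty ((G.induce G.spine) ≃g pathGraph G.spineOrder)

/-- The vertex sum at `v` of an edge labeling `f`: the sum of the labels of the
edges incident to `v`. -/
noncomputable def SimpleGraph.vertexSum [Fintype V] (G : SimpleGraph V)
    (f : Sym2 V → ℕ) (v : V) : ℕ :=
  ∑ e ∈ G.incidenceFinset v, f e

/-- A graph `G` is `k`-antimagic if there is an injection from its edge set to
`{1, 2, ..., |E(G)| + k}` such that all vertex sums are pairwise distinct. -/
def SimpleGraph.IsAntimagic [Fintype V] (G : SimpleGraph V) (k : ℕ) : Prop :=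
  ∃ f : Sym2 V → ℕ,
    (∀ e ∈ G.edgeFinset, f e ∈ Finset.Icc 1 (G.edgeFinset.card + k)) ∧
    Set.InjOn f ↑G.edgeFinset ∧
    Function.Injective (G.vertexSum f)

/-- A graph has a tail of order `t` if there is a path in the graph consisting of
one endpoint of a longest path together with `t - 1` further vertices, each of
which has degree `2` in the graph. -/
noncomputable def SimpleGraph.HasTail [Fintype V] (G : SimpleGraph V) (t : ℕ) : Prop :=
  ∃ (a b : V) (P : G.Walk a b), P.IsPath ∧
    (∀ (x y : V) (Q : G.Walk x y), Q.IsPath → Q.length ≤ P.length) ∧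
    ∃ (c d : V) (T : G.Walk c d), T.IsPath ∧ T.support.length = t ∧
      a ∈ T.support ∧ ∀ x ∈ T.support, x ≠ a → G.degree x = 2

/-! ### The structure of a caterpillar -/

/-- `w 0, …, w (s - 1)` lists the spine of `G` in path order, and every other vertex is a leaf
attached to a spine vertex. The values of `w` at indices `≥ s` are irrelevant. -/
structure SpineEnum [Fintype V] (G : SimpleGraph V) (s : ℕ) (w : ℕ → V) : Prop where
  inj : ∀ i < s, ∀ j < s, w i = w j → i = j
  deg : ∀ i < s, 2 ≤ G.degree (w i)
  surj : ∀ v, 2 ≤ G.degree v → ∃ i < s, w i = v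
  adj : ∀ i < s, ∀ j < s, (G.Adj (w i) (w j) ↔ i + 1 = j ∨ j + 1 = i)
  leaf : ∀ v, G.degree v < 2 → ∃ i < s, ∀ x, G.Adj v x ↔ x = w i

/-- The spine may be traversed in the opposite direction. -/
lemma SpineEnum.rev [Fintype V] {G : SimpleGraph V} {s : ℕ} {w : ℕ → V}
    (h : SpineEnum G s w) : SpineEnum G s (fun k => w (s - 1 - k)) where
  inj i hi j hj e := by have := h.inj _ (by omega) _ (by omega) e; omega
  deg i hi := h.deg _ (by omega)
  surj v hv := by
    obtain ⟨i, hi, rfl⟩ := h.surj v hv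
    exact ⟨s - 1 - i, by omega, by congr 1; omega⟩
  adj i hi j hj := by rw [h.adj _ (by omega) _ (by omega)]; omega
  leaf v hv := by
    obtain ⟨i, hi, hx⟩ := h.leaf v hv
    refine ⟨s - 1 - i, by omega, fun x => ?_⟩
    rw [hx, show s - 1 - (s - 1 - i) = i by omega]

lemma two_le_degree_of_adj [Fintype V] {G : SimpleGraph V} {v x y : V} (hx : G.Adj v x)
    (hy : G.Adj v y) (hxy : x ≠ y) : 2 ≤ G.degree v := by
  rw [← G.card_neighborFinset_eq_degree, ← Finset.card_pair hxy]
  exact Finset.card_le_card (by intro z; simp; rintro (rfl | rfl) <;> assumption)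

lemma three_le_degree_of_adj [Fintype V] {G : SimpleGraph V} {v x y z : V} (hx : G.Adj v x)
    (hy : G.Adj v y) (hz : G.Adj v z) (hxy : x ≠ y) (hxz : x ≠ z) (hyz : y ≠ z) :
    3 ≤ G.degree v := by
  rw [← G.card_neighborFinset_eq_degree, ← Finset.card_eq_three.2 ⟨x, y, z, hxy, hxz, hyz, rfl⟩]
  exact Finset.card_le_card (by intro t; simp; rintro (rfl | rfl | rfl) <;> assumption)

/-- In a connected graph with at least three vertices no two leaves are adjacent. -/
lemma leaf_neighbor [Fintype V] {G : SimpleGraph V} (hG : G.Connected)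
    (h3 : 3 ≤ Fintype.card V) {v : V} (hv : G.degree v < 2) :
    ∃ y, 2 ≤ G.degree y ∧ ∀ x, G.Adj v x ↔ x = y := by
  have : Nontrivial V := Fintype.one_lt_card_iff_nontrivial.1 (by omega)
  obtain ⟨y, hy⟩ := hG.preconnected.exists_adj_of_nontrivial v
  have huniq : ∀ x, G.Adj v x ↔ x = y := by
    intro x
    constructor
    · intro hx
      by_contra hne
      have := two_le_degree_of_adj hx hy hne
      omega
    · rintro rfl; exact hy
  refine ⟨y, ?_, huniq⟩
  by_contra hlt
  have hy' : ∀ x, G.Adj y x → x = v := by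
    intro x hx
    by_contra hne
    exact hlt (two_le_degree_of_adj hx hy.symm hne)
  have hall : ∀ x, x = v ∨ x = y := by
    intro x
    have hr := hG.preconnected v x
    rw [SimpleGraph.reachable_iff_reflTransGen] at hr
    induction hr with
    | refl => exact Or.inl rfl
    | tail _ hbc ih =>
      rcases ih with rfl | rfl
      · exact Or.inr ((huniq _).1 hbc)
      · exact Or.inl (hy' _ hbc)
  have : (Finset.univ : Finset V) ⊆ {v, y} := by
    intro x _
    simpa using hall x
  have := (Finset.card_le_card this).trans Finset.card_le_two
  rw [Finset.card_univ] at this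
  omega

lemma exists_spineEnum [Fintype V] {G : SimpleGraph V} (hC : G.IsCaterpillar)
    (h0 : 0 < G.spineOrder) : ∃ w, SpineEnum G G.spineOrder w := by
  obtain ⟨hT, h3, ⟨φ⟩⟩ := hC
  set s := G.spineOrder with hs
  let w : ℕ → V := fun k => if h : k < s then (φ.symm ⟨k, h⟩ : G.spine) else (φ.symm ⟨0, h0⟩ : G.spine)
  have hw : ∀ k (h : k < s), w k = (φ.symm ⟨k, h⟩ : G.spine) := fun k h => dif_pos h
  have hsurj : ∀ v, 2 ≤ G.degree v → ∃ i < s, w i = v := by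
    intro v hv
    refine ⟨φ ⟨v, hv⟩, (φ ⟨v, hv⟩).2, ?_⟩
    rw [hw _ (φ ⟨v, hv⟩).2]
    simp
  refine ⟨w, ?_, ?_, hsurj, ?_, ?_⟩
  · intro i hi j hj e
    rw [hw i hi, hw j hj] at e
    simpa using φ.symm.injective (Subtype.ext e)
  · intro i hi
    rw [hw i hi]
    exact (φ.symm ⟨i, hi⟩).2
  · intro i hi j hj
    rw [hw i hi, hw j hj]
    have := φ.symm.map_adj_iff (v := ⟨i, hi⟩) (w := ⟨j, hj⟩)
    rw [pathGraph_adj] at this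
    simpa using this
  · intro v hv
    obtain ⟨y, hy, hx⟩ := leaf_neighbor hT.1 h3 hv
    obtain ⟨i, hi, rfl⟩ := hsurj y hy
    exact ⟨i, hi, hx⟩

/-! ### Labelings of rooted trees -/

/-- If every edge joins a non-root vertex to its parent, labeling edges amounts to labeling
non-root vertices `v` by the label `g v` of the edge from `v` to its parent. -/
lemma isAntimagic_of_parent [Fintype V] (G : SimpleGraph V) (root : V) (par : V → V)
    (hadj : ∀ a b, G.Adj a b ↔ (a ≠ root ∧ par a = b) ∨ (b ≠ root ∧ par b = a))
    (h2 : ∀ a b, a ≠ root → b ≠ root → par a = b → par b ≠ a) (g : V → ℕ)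
    (hg : Set.InjOn g {root}ᶜ) (hb : ∀ v, v ≠ root → g v ∈ Finset.Icc 1 G.edgeFinset.card)
    (hsum : Function.Injective fun v =>
      ∑ c ∈ Finset.univ.filter (fun c => c ≠ root ∧ (c = v ∨ par c = v)), g c) :
    G.IsAntimagic 0 := by
  let ε : {v // v ≠ root} → Sym2 V := fun v => s(v.1, par v.1)
  have hε : Function.Injective ε := by
    rintro ⟨a, ha⟩ ⟨b, hb⟩ h
    rcases Sym2.eq_iff.1 h with ⟨h1, -⟩ | ⟨h1, h3⟩
    · exact Subtype.ext h1
    · exact absurd h1.symm (h2 a b ha hb h3)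
  let f : Sym2 V → ℕ := Function.extend ε (fun v => g v.1) 0
  have hf : ∀ v, v ≠ root → f s(v, par v) = g v := fun v hv =>
    hε.extend_apply (fun v => g v.1) 0 ⟨v, hv⟩
  have hedge : ∀ e ∈ G.edgeFinset, ∃ v, v ≠ root ∧ e = s(v, par v) := by
    intro e he
    induction e with | _ a b
    rw [mem_edgeFinset, mem_edgeSet, hadj] at he
    rcases he with ⟨h, rfl⟩ | ⟨h, rfl⟩
    · exact ⟨a, h, rfl⟩
    · exact ⟨b, h, Sym2.eq_swap⟩
  have hvs : ∀ v, G.vertexSum f v =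
      ∑ c ∈ Finset.univ.filter (fun c => c ≠ root ∧ (c = v ∨ par c = v)), g c := by
    intro v
    have : G.incidenceFinset v = (Finset.univ.filter
        (fun c => c ≠ root ∧ (c = v ∨ par c = v))).image (fun c => s(c, par c)) := by
      ext e
      rw [mem_incidenceFinset]
      simp only [Finset.mem_image, Finset.mem_filter, Finset.mem_univ, true_and]
      constructor
      · rintro ⟨he, hv⟩
        obtain ⟨c, hc, rfl⟩ := hedge e (mem_edgeFinset.2 he)
        refine ⟨c, ⟨hc, ?_⟩, rfl⟩
        rcases Sym2.mem_iff.1 hv with h | h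
        · exact Or.inl h.symm
        · exact Or.inr h.symm
      · rintro ⟨c, ⟨hc, hcv⟩, rfl⟩
        refine ⟨?_, ?_⟩
        · rw [mem_edgeSet, hadj]; exact Or.inl ⟨hc, rfl⟩
        · rw [Sym2.mem_iff]; tauto
    rw [SimpleGraph.vertexSum, this, Finset.sum_image]
    · exact Finset.sum_congr rfl fun c hc => hf c (by simp at hc; exact hc.1)
    · intro a ha b hb h
      simp at ha hb
      exact congrArg Subtype.val (@hε ⟨a, ha.1⟩ ⟨b, hb.1⟩ h)
  refine ⟨f, ?_, ?_, ?_⟩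
  · intro e he
    obtain ⟨v, hv, rfl⟩ := hedge e he
    rw [hf v hv]
    exact hb v hv
  · intro e he e' he' h
    obtain ⟨v, hv, rfl⟩ := hedge e he
    obtain ⟨v', hv', rfl⟩ := hedge e' he'
    rw [hf v hv, hf v' hv'] at h
    rw [hg hv hv' h]
  · have : G.vertexSum f = fun v =>
      ∑ c ∈ Finset.univ.filter (fun c => c ≠ root ∧ (c = v ∨ par c = v)), g c := funext hvs
    rw [this]
    exact hsum

/-! ### Distributing the labels of the legs -/

/-- The legs `L`, the leg `c` being attached at position `κ c`, can be given the labels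
`X + 1, …, X + |L|` so that positions with legs get distinct totals, whatever the base values
`b`. A bijection maximizing the sum of the squares of the totals works: were two totals equal,
exchanging two labels between these positions would increase that sum. -/
lemma exists_leg_labels [Fintype V] (L : Finset V) (κ : V → ℕ) (b : ℕ → ℕ) (X : ℕ) :
    ∃ g : V → ℕ, Set.InjOn g L ∧ (∀ v ∈ L, X < g v ∧ g v ≤ X + L.card) ∧
      ∀ v ∈ L, ∀ v' ∈ L, κ v ≠ κ v' →
        b (κ v) + ∑ c ∈ L with κ c = κ v, g c ≠ b (κ v') + ∑ c ∈ L with κ c = κ v', g c := by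
  obtain ⟨g₀, hg₀, hg₀b⟩ : ∃ g : V → ℕ, Set.InjOn g L ∧
      ∀ v ∈ L, X < g v ∧ g v ≤ X + L.card := by
    refine ⟨fun v => if h : v ∈ L then X + 1 + (L.equivFin ⟨v, h⟩).1 else 0, ?_, ?_⟩
    · intro v hv v' hv' h
      simp only [Finset.mem_coe] at hv hv'
      simp only [hv, hv', dif_pos] at h
      have := L.equivFin.injective (Fin.ext (by omega : (L.equivFin ⟨v, hv⟩).1 = (L.equivFin ⟨v', hv'⟩).1))
      simpa using this
    · intro v hv
      have := (L.equivFin ⟨v, hv⟩).2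
      simp only [hv, dif_pos]
      omega
  let T : Equiv.Perm V → ℕ → ℤ := fun σ k => b k + ∑ c ∈ L with κ c = k, (g₀ (σ c) : ℤ)
  obtain ⟨σ, hσ, hmax⟩ := Finset.exists_max_image
    (Finset.univ.filter (fun σ : Equiv.Perm V => ∀ v ∈ L, σ v ∈ L))
    (fun σ => ∑ k ∈ L.image κ, (T σ k) ^ 2) ⟨1, by simp⟩
  simp only [Finset.mem_filter, Finset.mem_univ, true_and] at hσ hmax
  refine ⟨fun v => g₀ (σ v), ?_, fun v hv => hg₀b _ (hσ v hv), ?_⟩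
  · intro v hv v' hv' h
    exact σ.injective (hg₀ (hσ v hv) (hσ v' hv') h)
  intro v hv v' hv' hne heq
  have hvv : v ≠ v' := fun h => hne (by rw [h])
  set d : ℤ := (g₀ (σ v') : ℤ) - g₀ (σ v) with hd
  have hd0 : d ≠ 0 := by
    intro h
    exact hvv (σ.injective (hg₀ (hσ v hv) (hσ v' hv') (by omega)))
  have heq' : T σ (κ v) = T σ (κ v') := by
    simp only [T]
    exact_mod_cast heq
  have hswap : ∀ c ∈ L, (σ * Equiv.swap v v') c ∈ L := by
    intro c hc
    rw [Equiv.Perm.mul_apply]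
    apply hσ
    rw [Equiv.swap_apply_def]
    split_ifs <;> assumption
  have hT : ∀ k, T (σ * Equiv.swap v v') k =
      T σ k + ((if κ v = k then d else 0) - (if κ v' = k then d else 0)) := by
    intro k
    have hpt : ∀ c, (g₀ ((σ * Equiv.swap v v') c) : ℤ) =
        g₀ (σ c) + ((if c = v then d else 0) - (if c = v' then d else 0)) := by
      intro c
      rw [Equiv.Perm.mul_apply, Equiv.swap_apply_def]
      split_ifs with h1 h2 h2
      · exact absurd (h1.symm.trans h2) hvv
      · subst h1; omega
      · subst h2; omega
      · omega
    simp only [T, hpt, Finset.sum_add_distrib, Finset.sum_sub_distrib, Finset.sum_ite_eq',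
      Finset.mem_filter, hv, hv', true_and]
    ring
  have key := hmax _ hswap
  have hsq : ∀ k, (T (σ * Equiv.swap v v') k) ^ 2 = (T σ k) ^ 2 +
      ((if κ v = k then 2 * d * T σ k + d ^ 2 else 0) +
        (if κ v' = k then - 2 * d * T σ k + d ^ 2 else 0)) := by
    intro k
    rw [hT]
    split_ifs with h1 h2 h2
    · exact absurd (h1.trans h2.symm) hne
    all_goals ring
  simp only [hsq, Finset.sum_add_distrib, Finset.sum_ite_eq,
    Finset.mem_image_of_mem κ hv, Finset.mem_image_of_mem κ hv', if_true, heq'] at key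
  have : 0 < d ^ 2 := by positivity
  linarith

/-! ### The labeling of a caterpillar with a tail -/

/-- The label of the `k`-th edge of the longest path: even positions carry `X, X - 1, …`, odd
positions carry `m, m - 1, …`. -/
def pathLabel (X m k : ℕ) : ℕ := if k % 2 = 0 then X - k / 2 else m - k / 2

/-- A caterpillar is antimagic if the last `(s - 1) / 2 - 1` vertices of its spine carry no leg
besides the end leaf `u'`. -/
lemma isAntimagic_of_spineEnum [Fintype V] {G : SimpleGraph V} (hG : G.IsTree) {s : ℕ}
    (hs : 3 ≤ s) {w : ℕ → V} (h : SpineEnum G s w) {u u' : V} (hu : G.degree u < 2)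
    (hu' : G.degree u' < 2) (hau : G.Adj u (w 0)) (hau' : G.Adj u' (w (s - 1)))
    (hleg : ∀ v, G.degree v < 2 → v ≠ u → v ≠ u' → ∀ k < s, G.Adj v (w k) →
      k + (s - 1) / 2 ≤ s) :
    G.IsAntimagic 0 := by
  choose! κ hκ using h.leaf
  choose! idx hidx using h.surj
  have hκlt : ∀ v, G.degree v < 2 → κ v < s := fun v hv => (hκ v hv).1
  have hκadj : ∀ v, G.degree v < 2 → ∀ x, G.Adj v x ↔ x = w (κ v) := fun v hv => (hκ v hv).2
  have hidxw : ∀ k < s, idx (w k) = k := fun k hk =>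
    h.inj _ (hidx _ (h.deg k hk)).1 _ hk (hidx _ (h.deg k hk)).2
  have hκu : κ u = 0 :=
    (h.inj _ (by omega) _ (hκlt u hu) ((hκadj u hu _).1 hau)).symm
  have hκu' : κ u' = s - 1 :=
    (h.inj _ (by omega) _ (hκlt u' hu') ((hκadj u' hu' _).1 hau')).symm
  have huu' : u ≠ u' := by rintro rfl; omega
  have hcases : ∀ v, (∃ k < s, v = w k) ∨ G.degree v < 2 := by
    intro v
    by_cases hv : 2 ≤ G.degree v
    · exact Or.inl ⟨idx v, (hidx v hv).1, (hidx v hv).2.symm⟩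
    · exact Or.inr (by omega)
  have hwleaf : ∀ k < s, ∀ v, G.degree v < 2 → w k ≠ v := by
    rintro k hk v hv rfl
    have := h.deg k hk
    omega
  let par : V → V := fun v => if G.degree v < 2 then w (κ v) else w (idx v - 1)
  have hparl : ∀ v, G.degree v < 2 → par v = w (κ v) := fun v hv => if_pos hv
  have hparw : ∀ k < s, par (w k) = w (k - 1) := by
    intro k hk
    simp only [par]
    rw [if_neg (by have := h.deg k hk; omega), hidxw k hk]
  let L : Finset V := Finset.univ.filter fun v => G.degree v < 2 ∧ v ≠ u ∧ v ≠ u'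
  have hL : ∀ v, v ∈ L ↔ G.degree v < 2 ∧ v ≠ u ∧ v ≠ u' := fun v => by simp [L]
  -- The number of edges is the number of spine vertices, plus that of legs, plus one.
  have hm : G.edgeFinset.card = s + 1 + L.card := by
    have h1 := hG.card_edgeFinset
    have h2 : (Finset.univ : Finset V) = (Finset.range s).image w ∪ (insert u (insert u' L)) := by
      ext v
      simp only [Finset.mem_univ, Finset.mem_union, Finset.mem_image, Finset.mem_range,
        Finset.mem_insert, hL, true_iff]
      rcases hcases v with ⟨k, hk, rfl⟩ | hv
      · exact Or.inl ⟨k, hk, rfl⟩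
      · tauto
    have h3 : Disjoint ((Finset.range s).image w) (insert u (insert u' L)) := by
      rw [Finset.disjoint_left]
      intro v hv hv'
      simp only [Finset.mem_image, Finset.mem_range, Finset.mem_insert, hL] at hv hv'
      obtain ⟨k, hk, rfl⟩ := hv
      rcases hv' with e | e | e
      · exact hwleaf k hk _ hu e
      · exact hwleaf k hk _ hu' e
      · exact hwleaf k hk _ e.1 rfl
    rw [← Finset.card_univ, h2, Finset.card_union_of_disjoint h3, Finset.card_image_of_injOn,
      Finset.card_insert_of_notMem, Finset.card_insert_of_notMem, Finset.card_range] at h1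
    · omega
    · simp [hL]
    · simp [hL, huu']
    · intro i hi j hj e
      exact h.inj i (by simpa using hi) j (by simpa using hj) e
  set m := G.edgeFinset.card with hmdef
  obtain ⟨X, hX⟩ : ∃ X, X = s / 2 + 1 := ⟨_, rfl⟩
  obtain ⟨leg, hlinj, hlb, hlsum⟩ := exists_leg_labels L κ (fun k => X + m - k) X
  -- Position on the longest path of the edge from `v` to its parent.
  let pos : V → ℕ := fun v => if v = u then 0 else if v = u' then s else idx v
  let g : V → ℕ := fun v => if v ∈ L then leg v else pathLabel X m (pos v)
  have hgL : ∀ v ∈ L, g v = leg v := fun v hv => if_pos hv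
  have hgu : g u = pathLabel X m 0 := by simp [g, hL, pos]
  have hgu' : g u' = pathLabel X m s := by simp [g, hL, pos, huu'.symm]
  have hwL : ∀ k < s, w k ∉ L := fun k hk hkL => hwleaf k hk _ ((hL _).1 hkL).1 rfl
  have hgw : ∀ k < s, g (w k) = pathLabel X m k := by
    intro k hk
    simp only [g, if_neg (hwL k hk), pos, if_neg (hwleaf k hk _ hu), if_neg (hwleaf k hk _ hu'),
      hidxw k hk]
  have hnr : ∀ v, v ≠ w 0 → (v ∈ L) ∨ (∃ k ≤ s, g v = pathLabel X m k ∧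
      ((k = 0 ∧ v = u) ∨ (k = s ∧ v = u') ∨ (0 < k ∧ k < s ∧ v = w k))) := by
    intro v hv
    rcases hcases v with ⟨k, hk, rfl⟩ | hvl
    · have : k ≠ 0 := by rintro rfl; exact hv rfl
      exact Or.inr ⟨k, hk.le, hgw k hk, Or.inr (Or.inr ⟨by omega, hk, rfl⟩)⟩
    · by_cases h1 : v = u
      · exact Or.inr ⟨0, by omega, by rw [h1, hgu], Or.inl ⟨rfl, h1⟩⟩
      by_cases h2 : v = u'
      · exact Or.inr ⟨s, le_rfl, by rw [h2, hgu'], Or.inr (Or.inl ⟨rfl, h2⟩)⟩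
      exact Or.inl ((hL v).2 ⟨hvl, h1, h2⟩)
  have hpl : ∀ k ≤ s, (1 ≤ pathLabel X m k ∧ pathLabel X m k ≤ m) ∧
      (pathLabel X m k ≤ X ∨ X + L.card < pathLabel X m k) := by
    intro k hk
    unfold pathLabel
    split_ifs <;> omega
  have hplinj : ∀ k ≤ s, ∀ j ≤ s, pathLabel X m k = pathLabel X m j → k = j := by
    intro k hk j hj
    unfold pathLabel
    split_ifs <;> omega
  have hpls : pathLabel X m s ≤ X + L.card + 1 := by
    unfold pathLabel
    split_ifs <;> omega
  have hginj : Set.InjOn g {w 0}ᶜ := by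
    intro v hv v' hv' e
    rcases hnr v hv with hvL | ⟨k, hk, hgk, hk'⟩ <;> rcases hnr v' hv' with hvL' | ⟨j, hj, hgj, hj'⟩
    · rw [hgL v hvL, hgL v' hvL'] at e
      exact hlinj hvL hvL' e
    · rw [hgL v hvL, hgj] at e
      have := hlb v hvL
      have := (hpl j hj).2
      omega
    · rw [hgL v' hvL', hgk] at e
      have := hlb v' hvL'
      have := (hpl k hk).2
      omega
    · rw [hgk, hgj] at e
      have := hplinj k hk j hj e
      subst this
      rcases hk' with ⟨a, rfl⟩ | ⟨a, rfl⟩ | ⟨a, a', rfl⟩ <;>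
        rcases hj' with ⟨c, rfl⟩ | ⟨c, rfl⟩ | ⟨c, c', rfl⟩ <;> first | rfl | omega
  -- The two path edges at `w k` contribute `X + m - k`.
  have hsumw : ∀ k < s, ∑ c ∈ Finset.univ.filter
      (fun c => c ≠ w 0 ∧ (c = w k ∨ par c = w k)), g c =
      (X + m - k) + ∑ c ∈ L with κ c = k, leg c := by
    intro k hk
    let q : ℕ → V := fun k => if k = 0 then u else if k = s then u' else w k
    have hq : ∀ k ≤ s, g (q k) = pathLabel X m k ∧ q k ∉ L := by
      intro k hk
      simp only [q]
      split_ifs with h1 h2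
      · subst h1; exact ⟨hgu, by simp [hL]⟩
      · subst h2; exact ⟨hgu', by simp [hL]⟩
      · exact ⟨hgw k (by omega), hwL k (by omega)⟩
    have hqne : q k ≠ q (k + 1) := by
      intro e
      have := (hq k hk.le).1
      rw [e, (hq (k + 1) hk).1] at this
      have := hplinj _ hk _ hk.le this
      omega
    have hset : Finset.univ.filter (fun c => c ≠ w 0 ∧ (c = w k ∨ par c = w k)) =
        insert (q k) (insert (q (k + 1)) (L.filter fun c => κ c = k)) := by
      ext c
      simp only [Finset.mem_filter, Finset.mem_univ, true_and, Finset.mem_insert]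
      rcases hcases c with ⟨j, hj, rfl⟩ | hc
      · have e1 : ∀ i < s, w j = w i ↔ j = i := fun i hi =>
          ⟨h.inj j hj i hi, fun e => by rw [e]⟩
        have e2 : ∀ i ≤ s, w j = q i ↔ (0 < i ∧ j = i) := by
          intro i hi
          simp only [q]
          split_ifs with h1 h2
          · simp [h1, hwleaf j hj u hu]
          · simp only [hwleaf j hj u' hu', false_iff]; omega
          · rw [e1 i (by omega)]; omega
        have e3 : w (j - 1) = w k ↔ j - 1 = k :=
          ⟨h.inj _ (by omega) k hk, fun e => by rw [e]⟩
        rw [e2 k hk.le, e2 (k + 1) hk, hparw j hj, e3, e1 k hk, ne_eq, e1 0 (by omega)]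
        simp only [hwL j hj, false_and, or_false]
        omega
      · have e1 : ∀ i < s, c ≠ w i := fun i hi => (hwleaf i hi c hc).symm
        have e3 : w (κ c) = w k ↔ κ c = k :=
          ⟨h.inj _ (hκlt c hc) k hk, fun e => by rw [e]⟩
        have e4 : c = q k ↔ k = 0 ∧ c = u := by
          simp only [q]
          split_ifs with h1 h2
          · simp [h1]
          · omega
          · simp [h1, e1 k hk]
        have e5 : c = q (k + 1) ↔ k + 1 = s ∧ c = u' := by
          simp only [q]
          rw [if_neg (by omega)]
          split_ifs with h2
          · simp [h2]
          · simp [h2, e1 (k + 1) (by omega)]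
        rw [hparl c hc, e3, e4, e5, hL]
        simp only [ne_eq, e1 0 (by omega), e1 k hk, not_false_eq_true, true_and, false_or, hc]
        constructor
        · intro hck
          by_cases h1 : c = u
          · subst h1; exact Or.inl ⟨by omega, rfl⟩
          by_cases h2 : c = u'
          · subst h2; exact Or.inr (Or.inl ⟨by omega, rfl⟩)
          exact Or.inr (Or.inr ⟨⟨h1, h2⟩, hck⟩)
        · rintro (⟨h1, rfl⟩ | ⟨h1, rfl⟩ | ⟨-, h1⟩) <;> omega
    rw [hset, Finset.sum_insert, Finset.sum_insert, (hq k hk.le).1, (hq (k + 1) hk).1,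
      ← add_assoc]
    · congr 1
      · unfold pathLabel
        split_ifs <;> omega
      · exact Finset.sum_congr rfl fun c hc => hgL c (Finset.mem_filter.1 hc).1
    · simp [(hq (k + 1) hk).2]
    · simp [(hq k hk.le).2, hqne]
  have hsuml : ∀ v, G.degree v < 2 → ∑ c ∈ Finset.univ.filter
      (fun c => c ≠ w 0 ∧ (c = v ∨ par c = v)), g c = g v := by
    intro v hv
    have : Finset.univ.filter (fun c => c ≠ w 0 ∧ (c = v ∨ par c = v)) = {v} := by
      ext c
      simp only [Finset.mem_filter, Finset.mem_univ, true_and, Finset.mem_singleton]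
      constructor
      · rintro ⟨-, rfl | e⟩
        · rfl
        · rcases hcases c with ⟨j, hj, rfl⟩ | hc
          · rw [hparw j hj] at e
            exact absurd e (hwleaf _ (by omega) v hv)
          · rw [hparl c hc] at e
            exact absurd e (hwleaf _ (hκlt c hc) v hv)
      · rintro rfl
        exact ⟨(hwleaf 0 (by omega) c hv).symm, Or.inl rfl⟩
    rw [this, Finset.sum_singleton]
  have hgleaf : ∀ v, G.degree v < 2 → g v ≤ X + L.card + 1 := by
    intro v hv
    rcases hnr v (hwleaf 0 (by omega) v hv).symm with hvL |
      ⟨k, hk, hgk, ⟨rfl, rfl⟩ | ⟨rfl, rfl⟩ | ⟨a, a', rfl⟩⟩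
    · have := hlb v hvL
      rw [hgL v hvL]; omega
    · rw [hgk]; simp [pathLabel]; omega
    · rw [hgk]; exact hpls
    · exact absurd rfl (hwleaf k a' _ hv)
  -- A spine vertex carrying a leg has a larger sum than any spine vertex of degree two.
  have hbig : ∀ v ∈ L, X + m < (X + m - κ v) + ∑ c ∈ L with κ c = κ v, leg c := by
    intro v hv
    have h1 : leg v ≤ ∑ c ∈ L with κ c = κ v, leg c :=
      Finset.single_le_sum (f := leg) (fun _ _ => Nat.zero_le _) (by simp [hv])
    have hv' := (hL v).1 hv
    have h2 := hleg v hv'.1 hv'.2.1 hv'.2.2 (κ v) (hκlt v hv'.1) ((hκadj v hv'.1 _).2 rfl)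
    have h3 := hlb v hv
    omega
  have hempty : ∀ k, (∀ v ∈ L, κ v ≠ k) → ∑ c ∈ L with κ c = k, leg c = 0 := by
    intro k hk
    rw [Finset.filter_false_of_mem hk, Finset.sum_empty]
  refine isAntimagic_of_parent G (w 0) par ?_ ?_ g hginj ?_ ?_
  · intro a b
    rcases hcases a with ⟨i, hi, rfl⟩ | ha <;> rcases hcases b with ⟨j, hj, rfl⟩ | hb
    · rw [h.adj i hi j hj, hparw i hi, hparw j hj]
      have e : ∀ i < s, ∀ j < s, w i = w j ↔ i = j := fun i hi j hj =>
        ⟨h.inj i hi j hj, fun e => by rw [e]⟩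
      rw [ne_eq, ne_eq, e i hi 0 (by omega), e j hj 0 (by omega), e _ (by omega) j hj,
        e _ (by omega) i hi]
      omega
    · rw [G.adj_comm, hκadj b hb, hparw i hi, hparl b hb]
      have := hwleaf (i - 1) (by omega) b hb
      have := (hwleaf 0 (by omega) b hb).symm
      simp only [ne_eq, *, not_false_eq_true, true_and, and_false, false_or]
      exact eq_comm
    · rw [hκadj a ha, hparw j hj, hparl a ha]
      have := hwleaf (j - 1) (by omega) a ha
      have := (hwleaf 0 (by omega) a ha).symm
      simp only [ne_eq, *, not_false_eq_true, true_and, and_false, or_false]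
      exact eq_comm
    · rw [hκadj a ha, hparl a ha, hparl b hb]
      have h1 := hwleaf _ (hκlt a ha) b hb
      have h2 := hwleaf _ (hκlt b hb) a ha
      simp [h1, h2, h1.symm]
  · intro a b ha hb hab hba
    rcases hcases a with ⟨i, hi, rfl⟩ | ha' <;> rcases hcases b with ⟨j, hj, rfl⟩ | hb'
    · rw [hparw i hi] at hab
      rw [hparw j hj] at hba
      have h1 := h.inj _ (by omega) j hj hab
      have h2 := h.inj _ (by omega) i hi hba
      have h3 : i = 0 := by omega
      exact ha (by rw [h3])
    · rw [hparw i hi] at hab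
      exact hwleaf _ (by omega) b hb' hab
    · rw [hparw j hj] at hba
      exact hwleaf _ (by omega) a ha' hba
    · rw [hparl a ha'] at hab
      exact hwleaf _ (hκlt a ha') b hb' hab
  · intro v hv
    rw [Finset.mem_Icc]
    rcases hnr v hv with hvL | ⟨k, hk, hgk, -⟩
    · have := hlb v hvL
      rw [hgL v hvL]; omega
    · rw [hgk]; exact (hpl k hk).1
  · intro v v' e
    simp only at e
    rcases hcases v with ⟨i, hi, rfl⟩ | ha <;> rcases hcases v' with ⟨j, hj, rfl⟩ | hb
    · rw [hsumw i hi, hsumw j hj] at e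
      by_contra hne
      have hij : i ≠ j := by rintro rfl; exact hne rfl
      by_cases h1 : ∀ v ∈ L, κ v ≠ i <;> by_cases h2 : ∀ v ∈ L, κ v ≠ j
      · rw [hempty i h1, hempty j h2] at e
        omega
      · push Not at h2
        obtain ⟨v, hv, rfl⟩ := h2
        have := hbig v hv
        rw [hempty i h1] at e
        omega
      · push Not at h1
        obtain ⟨v, hv, rfl⟩ := h1
        have := hbig v hv
        rw [hempty j h2] at e
        omega
      · push Not at h1 h2
        obtain ⟨v, hv, rfl⟩ := h1
        obtain ⟨v', hv', rfl⟩ := h2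
        exact hlsum v hv v' hv' hij e
    · rw [hsumw i hi, hsuml v' hb] at e
      have := hgleaf v' hb
      omega
    · rw [hsumw j hj, hsuml v ha] at e
      have := hgleaf v ha
      omega
    · rw [hsuml v ha, hsuml v' hb] at e
      exact hginj (hwleaf 0 (by omega) v ha).symm (hwleaf 0 (by omega) v' hb).symm e

/-! ### Longest paths and tails -/

/-- Each vertex of a path other than its ends has two distinct neighbors on the path. -/
lemma exists_two_adj_of_mem_support {G : SimpleGraph V} {a b : V} {P : G.Walk a b}
    (hP : P.IsPath) {v : V} (hv : v ∈ P.support) (ha : v ≠ a) (hb : v ≠ b) :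
    ∃ x ∈ P.support, ∃ y ∈ P.support, x ≠ y ∧ G.Adj v x ∧ G.Adj v y := by
  obtain ⟨n, rfl, hn⟩ := (Walk.mem_support_iff_exists_getVert).1 hv
  have h0 : n ≠ 0 := by rintro rfl; simp at ha
  have h1 : n ≠ P.length := by rintro rfl; simp at hb
  refine ⟨P.getVert (n - 1), P.getVert_mem_support _, P.getVert (n + 1),
    P.getVert_mem_support _, ?_, ?_, ?_⟩
  · intro e
    have := hP.getVert_injOn (x₁ := n - 1) (x₂ := n + 1) (by simp; omega) (by simp; omega) e
    omega
  · have := P.adj_getVert_succ (i := n - 1) (by omega)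
    rw [show n - 1 + 1 = n by omega] at this
    exact this.symm
  · exact P.adj_getVert_succ (by omega)

/-- A path starting in a leaf at `w 0` and running along the spine. -/
lemma SpineEnum.exists_path [Fintype V] {G : SimpleGraph V} {s : ℕ} {w : ℕ → V}
    (h : SpineEnum G s w) {u : V} (hu : G.degree u < 2) (hau : G.Adj u (w 0)) (k : ℕ)
    (hk : k < s) : ∃ P : G.Walk u (w k), P.IsPath ∧ P.length = k + 1 ∧
      ∀ x ∈ P.support, x = u ∨ ∃ i ≤ k, x = w i := by
  induction k with
  | zero =>
    refine ⟨hau.toWalk, ?_, rfl, ?_⟩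
    · exact hau.isPath_toWalk
    · intro x hx
      simp at hx
      rcases hx with rfl | rfl
      · exact Or.inl rfl
      · exact Or.inr ⟨0, le_rfl, rfl⟩
  | succ k ih =>
    obtain ⟨P, hP, hl, hsup⟩ := ih (by omega)
    have hadj : G.Adj (w k) (w (k + 1)) := (h.adj k (by omega) (k + 1) hk).2 (Or.inl rfl)
    refine ⟨P.concat hadj, ?_, by simp [hl], ?_⟩
    · refine hP.concat ?_ hadj
      intro hmem
      rcases hsup _ hmem with e | ⟨i, hi, e⟩
      · have := h.deg (k + 1) hk
        rw [e] at this
        omega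
      · have := h.inj _ hk i (by omega) e
        omega
    · intro x hx
      rw [Walk.support_concat] at hx
      simp only [List.mem_append, List.mem_singleton] at hx
      rcases hx with hx | rfl
      · rcases hsup x hx with e | ⟨i, hi, e⟩
        · exact Or.inl e
        · exact Or.inr ⟨i, by omega, e⟩
      · exact Or.inr ⟨k + 1, le_rfl, rfl⟩

/-- The first spine vertex carries a leaf. -/
lemma SpineEnum.exists_leaf [Fintype V] {G : SimpleGraph V} {s : ℕ} {w : ℕ → V}
    (h : SpineEnum G s w) (hs : 3 ≤ s) : ∃ u, G.degree u < 2 ∧ G.Adj u (w 0) := by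
  by_contra hno
  push Not at hno
  have h2 := h.deg 0 (by omega)
  have : G.neighborFinset (w 0) ⊆ {w 1} := by
    intro x hx
    rw [mem_neighborFinset] at hx
    rw [Finset.mem_singleton]
    by_cases hd : 2 ≤ G.degree x
    · obtain ⟨i, hi, rfl⟩ := h.surj x hd
      rw [h.adj 0 (by omega) i hi] at hx
      congr 1; omega
    · exact absurd hx.symm (hno x (by omega))
  have := Finset.card_le_card this
  rw [G.card_neighborFinset_eq_degree, Finset.card_singleton] at this
  omega

/-- An endpoint of a longest path is a leaf attached to one of the two ends of the spine. -/
lemma SpineEnum.longest [Fintype V] {G : SimpleGraph V} {s : ℕ} {w : ℕ → V}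
    (h : SpineEnum G s w) (hs : 3 ≤ s) {a b : V} {P : G.Walk a b} (hP : P.IsPath)
    (hmax : ∀ (x y : V) (Q : G.Walk x y), Q.IsPath → Q.length ≤ P.length) :
    G.degree a < 2 ∧ (G.Adj a (w 0) ∨ G.Adj a (w (s - 1))) := by
  obtain ⟨u, hu, hau⟩ := h.exists_leaf hs
  obtain ⟨u', hu', hau'⟩ := h.rev.exists_leaf hs
  simp only [Nat.sub_zero] at hau'
  have hwleaf : ∀ k < s, ∀ v, G.degree v < 2 → w k ≠ v := by
    rintro k hk v hv rfl
    have := h.deg k hk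
    omega
  have huniq : ∀ v, G.degree v < 2 → ∀ i < s, ∀ j < s, G.Adj v (w i) → G.Adj v (w j) → i = j := by
    intro v hv i hi j hj h1 h2
    obtain ⟨k, hk, hx⟩ := h.leaf v hv
    exact h.inj i hi j hj (((hx _).1 h1).trans ((hx _).1 h2).symm)
  have hlen : s + 1 ≤ P.length := by
    obtain ⟨Q, hQ, hl, hsup⟩ := h.exists_path hu hau (s - 1) (by omega)
    have := hmax _ _ (Q.concat hau'.symm) (hQ.concat (by
      intro hmem
      rcases hsup _ hmem with rfl | ⟨i, hi, e⟩
      · have := huniq u' hu' 0 (by omega) (s - 1) (by omega) hau hau'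
        omega
      · exact hwleaf i (by omega) u' hu' e.symm) hau'.symm)
    rw [Walk.length_concat, hl] at this
    omega
  have hint : ∀ v ∈ P.support, G.degree v < 2 → v = a ∨ v = b := by
    intro v hv hd
    by_contra hne
    push Not at hne
    obtain ⟨x, -, y, -, hxy, hx, hy⟩ := exists_two_adj_of_mem_support hP hv hne.1 hne.2
    have := two_le_degree_of_adj hx hy hxy
    omega
  -- Counting: the path has at least `s + 2` vertices, all in the spine or equal to `a` or `b`.
  have hsub : P.support.toFinset ⊆ (Finset.range s).image w ∪ {a, b} := by
    intro v hv
    rw [List.mem_toFinset] at hv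
    simp only [Finset.mem_union, Finset.mem_image, Finset.mem_range, Finset.mem_insert,
      Finset.mem_singleton]
    by_cases hd : 2 ≤ G.degree v
    · exact Or.inl (h.surj v hd)
    · exact Or.inr (hint v hv (by omega))
  have hcard : P.support.toFinset.card = P.length + 1 := by
    rw [List.toFinset_card_of_nodup hP.support_nodup, Walk.length_support]
  have hcardw : ((Finset.range s).image w).card ≤ s := by
    simpa using Finset.card_image_le (s := Finset.range s) (f := w)
  have hun := Finset.card_union_le ((Finset.range s).image w) {a, b}
  have hab : ({a, b} : Finset V).card ≤ 2 := Finset.card_le_two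
  have heq := Finset.eq_of_subset_of_card_le hsub (by omega)
  have hmem : ∀ k < s, w k ∈ P.support := by
    intro k hk
    rw [← List.mem_toFinset, heq]
    exact Finset.mem_union_left _ (Finset.mem_image_of_mem w (Finset.mem_range.2 hk))
  have hdisj : ∀ v, v = a ∨ v = b → G.degree v < 2 := by
    intro v hv
    by_contra hd
    obtain ⟨k, hk, rfl⟩ := h.surj v (by omega)
    have : (Finset.range s).image w ∪ {a, b} ⊆
        (Finset.range s).image w ∪ (({a, b} : Finset V).erase (w k)) := by
      intro x hx
      simp only [Finset.mem_union, Finset.mem_erase] at hx ⊢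
      by_cases hxk : x = w k
      · exact Or.inl (hxk ▸ Finset.mem_image_of_mem w (Finset.mem_range.2 hk))
      · tauto
    have h1 := Finset.card_le_card this
    have h2 := Finset.card_union_le ((Finset.range s).image w) (({a, b} : Finset V).erase (w k))
    have h3 : (({a, b} : Finset V).erase (w k)).card < ({a, b} : Finset V).card :=
      Finset.card_erase_lt_of_mem (by simpa using hv)
    rw [← heq] at h1
    omega
  have hend : ∀ k < s, ∀ j, (∀ i < s, G.Adj (w k) (w i) → i = j) →
      G.Adj a (w k) ∨ G.Adj b (w k) := by
    intro k hk j hj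
    obtain ⟨x, hx, y, hy, hxy, hax, hay⟩ := exists_two_adj_of_mem_support hP (hmem k hk)
      (hwleaf k hk a (hdisj a (Or.inl rfl))) (hwleaf k hk b (hdisj b (Or.inr rfl)))
    have key : ∀ z ∈ P.support, G.Adj (w k) z → z ≠ w j → G.Adj a (w k) ∨ G.Adj b (w k) := by
      intro z hz haz hzj
      by_cases hd : 2 ≤ G.degree z
      · obtain ⟨i, hi, rfl⟩ := h.surj z hd
        exact absurd (by rw [hj i hi haz]) hzj
      · rcases hint z hz (by omega) with rfl | rfl
        · exact Or.inl haz.symm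
        · exact Or.inr haz.symm
    by_cases hxj : x = w j
    · exact key y hy hay (fun e => hxy (hxj.trans e.symm))
    · exact key x hx hax hxj
  refine ⟨hdisj a (Or.inl rfl), ?_⟩
  rcases hend 0 (by omega) 1 (fun i hi hi' => by
    rw [h.adj 0 (by omega) i hi] at hi'; omega) with h1 | h1
  · exact Or.inl h1
  rcases hend (s - 1) (by omega) (s - 2) (fun i hi hi' => by
    rw [h.adj (s - 1) (by omega) i hi] at hi'; omega) with h2 | h2
  · exact Or.inr h2
  have := huniq b (hdisj b (Or.inr rfl)) 0 (by omega) (s - 1) (by omega) h1 h2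
  omega

/-- A tail of order `t` starting in a leaf at the end of the spine runs along the last `t - 1`
spine vertices, which therefore have degree two. -/
lemma SpineEnum.tail [Fintype V] {G : SimpleGraph V} {s : ℕ} {w : ℕ → V}
    (h : SpineEnum G s w) {a d : V} (ha : G.degree a < 2)
    (haw : G.Adj a (w (s - 1))) {T : G.Walk a d} (hT : T.IsPath)
    (hlen : T.length < s) (hdeg : ∀ x ∈ T.support, x ≠ a → G.degree x = 2) :
    ∀ i < T.length, G.degree (w (s - 1 - i)) = 2 := by
  have hne : ∀ i, i < T.length → T.getVert (i + 1) ≠ a := by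
    intro i hi e
    have := hT.getVert_injOn (x₁ := i + 1) (x₂ := 0) (by simp; omega) (by simp) (by simpa using e)
    omega
  have hd : ∀ i < T.length, G.degree (T.getVert (i + 1)) = 2 := fun i hi =>
    hdeg _ (T.getVert_mem_support _) (hne i hi)
  have main : ∀ i < T.length, T.getVert (i + 1) = w (s - 1 - i) ∧
      (∀ j < s, w j = T.getVert i → s - 1 - i < j) := by
    intro i
    induction i with
    | zero =>
      intro hi
      have h1 := T.adj_getVert_succ (i := 0) hi
      obtain ⟨k, hk, hx⟩ := h.leaf a ha
      rw [Walk.getVert_zero] at h1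
      refine ⟨((hx _).1 h1).trans ((hx _).1 haw).symm, ?_⟩
      intro j hj e
      have := h.deg j hj
      rw [e, Walk.getVert_zero] at this
      omega
    | succ i ih =>
      intro hi
      obtain ⟨h1, h2⟩ := ih (by omega)
      have hadj1 := T.adj_getVert_succ (i := i) (by omega)
      have hadj2 := T.adj_getVert_succ (i := i + 1) (by omega)
      have hadj3 : G.Adj (w (s - 1 - i)) (w (s - 1 - (i + 1))) := by
        rw [h.adj _ (by omega) _ (by omega)]; omega
      have hd2 := hd i (by omega)
      rw [← h1] at hadj3
      refine ⟨?_, ?_⟩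
      · by_contra hcon
        have h3 : T.getVert i ≠ T.getVert (i + 1 + 1) := by
          intro e
          have := hT.getVert_injOn (x₁ := i) (x₂ := i + 1 + 1) (by simp; omega) (by simp; omega) e
          omega
        have h4 : T.getVert i ≠ w (s - 1 - (i + 1)) := by
          intro e
          have := h2 _ (by omega) e.symm
          omega
        have := three_le_degree_of_adj hadj1.symm hadj2 hadj3 h3 h4 hcon
        omega
      · intro j hj e
        have := h.inj j hj _ (by omega) (e.trans h1)
        omega
  intro i hi
  rw [← (main i hi).1]
  exact hd i hi

/-- The case in which the tail lies at the end of the chosen enumeration of the spine. -/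
lemma SpineEnum.isAntimagic [Fintype V] {G : SimpleGraph V} (hG : G.IsTree) {s : ℕ} {w : ℕ → V}
    (h : SpineEnum G s w) (hs : 3 ≤ s) {a d : V} (ha : G.degree a < 2)
    (haw : G.Adj a (w (s - 1))) {T : G.Walk a d} (hT : T.IsPath)
    (hlen : T.length + 1 = (s - 1) / 2) (hdeg : ∀ x ∈ T.support, x ≠ a → G.degree x = 2) :
    G.IsAntimagic 0 := by
  obtain ⟨u, hu, hau⟩ := h.exists_leaf hs
  refine isAntimagic_of_spineEnum hG hs h hu ha hau haw ?_
  intro v hv hvu hva k hk hadj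
  by_contra hcon
  have hd := h.tail ha haw hT (by omega) hdeg (s - 1 - k) (by omega)
  rw [show s - 1 - (s - 1 - k) = k by omega] at hd
  have h1 : G.Adj (w k) (w (k - 1)) := by
    rw [h.adj _ hk _ (by omega)]; omega
  have hleaf : ∀ i < s, ∀ v, G.degree v < 2 → w i ≠ v := by
    rintro i hi v hv rfl
    have := h.deg i hi
    omega
  have : 3 ≤ G.degree (w k) := by
    by_cases hks : k = s - 1
    · subst hks
      exact three_le_degree_of_adj h1 haw.symm hadj.symm (hleaf _ (by omega) _ ha)
        (hleaf _ (by omega) _ hv) (Ne.symm hva)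
    · have h2 : G.Adj (w k) (w (k + 1)) := by
        rw [h.adj _ hk _ (by omega)]; omega
      refine three_le_degree_of_adj h1 h2 hadj.symm (fun e => ?_)
        (hleaf _ (by omega) _ hv) (hleaf _ (by omega) _ hv)
      have := h.inj _ (by omega) _ (by omega) e
      omega
  omega

/-- A caterpillar with a spine of order `s` and a tail of order `⌊(s-1)/2⌋` is
antimagic. -/
theorem caterpillar_isAntimagic_of_hasTail [Fintype V] (G : SimpleGraph V)
    (hC : G.IsCaterpillar) (s : ℕ) (hs : s = G.spineOrder)
    (hT : G.HasTail ((s - 1) / 2)) :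
    G.IsAntimagic 0 := by
  obtain ⟨a, b, P, hP, hmax, c, d, T, hTp, hlen, haT, hdeg⟩ := hT
  rw [Walk.length_support] at hlen
  have h3 : 3 ≤ s := by omega
  obtain ⟨w, h⟩ := exists_spineEnum hC (by omega)
  rw [← hs] at h
  obtain ⟨ha, hend⟩ := h.longest h3 hP hmax
  -- The leaf `a` is an end of the tail, which may be taken to be the first one.
  obtain ⟨d', T', hT', hlen', hdeg'⟩ : ∃ (d' : V) (T' : G.Walk a d'), T'.IsPath ∧
      T'.length + 1 = (s - 1) / 2 ∧ ∀ x ∈ T'.support, x ≠ a → G.degree x = 2 := by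
    have : a = c ∨ a = d := by
      by_contra hne
      push Not at hne
      obtain ⟨x, -, y, -, hxy, hx, hy⟩ := exists_two_adj_of_mem_support hTp haT hne.1 hne.2
      have := two_le_degree_of_adj hx hy hxy
      omega
    rcases this with rfl | rfl
    · exact ⟨d, T, hTp, hlen, hdeg⟩
    · exact ⟨c, T.reverse, hTp.reverse, by rwa [Walk.length_reverse], by simpa using hdeg⟩
  rcases hend with hend | hend
  · refine h.rev.isAntimagic hC.1 h3 ha ?_ hT' hlen' hdeg'
    simpa using hend
  · exact h.isAntimagic hC.1 h3 ha hend hT' hlen' hdeg'
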